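/- (Laplace transform of the Caputo fractional derivative.) Let β ∈ (0,1), let f : [0,∞) → ℝ be continuously differentiable with bounded derivative, and let s > 0. Then ∫₀^∞ e^(−st) (D^β f)(t) dt = s^β ∫₀^∞ e^(−st) f(t) dt − s^(β−1) f(0), where both improper integrals converge and (D^β f)(t) = (1/Γ(1−β)) ∫₀ᵗ (t−u)^(−β) f′(u) du. -/

import Mathlib

/-!
The exponential `e^(-st) = e^(-su) e^(-s(t-u))` is multiplicative along a causal convolution, so the
Laplace transform turns `∫₀ᵗ g(u) k(t-u) du` into the product of the transforms of `g` and `k`, with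
convergence for free from Fubini. This is used twice with `g = f'`: the kernel `t^(-β) / Γ(1-β)`, of
transform `s^(β-1)`, gives `D^β f`, and the kernel `1`, of transform `s⁻¹`, gives `f - f(0)`.
Eliminating the transform of `f'` between the two gives the formula, with no integration by parts
and hence no boundary term at infinity.
-/

open MeasureTheory intervalIntegral

/-- Caputo fractional derivative of order `β` of a real-valued function `f`. -/
noncomputable def caputo (β : ℝ) (f : ℝ → ℝ) (t : ℝ) : ℝ :=
  (1 / Real.Gamma (1 - β)) * ∫ u in (0:ℝ)..t, (t - u) ^ (-β) * deriv f u

section Laplace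

open Set

variable {E F G : Type*} [NormedAddCommGroup E] [NormedSpace ℝ E] [NormedAddCommGroup F]
  [NormedSpace ℝ F] [NormedAddCommGroup G] [NormedSpace ℝ G] {s : ℝ}

/-- The Laplace integral `∫₀^∞ e^(-st) f(t) dt` converges absolutely, with value `a`. Convergence is
part of the definition so that the value is never the junk value of a divergent integral. -/
def HasLaplaceTransform (f : ℝ → E) (s : ℝ) (a : E) : Prop :=
  IntegrableOn (fun t => Real.exp (-(s * t)) • f t) (Ioi 0) ∧
    ∫ t in Ioi (0 : ℝ), Real.exp (-(s * t)) • f t = a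

namespace HasLaplaceTransform

theorem congr {f g : ℝ → E} {a : E} (hf : HasLaplaceTransform f s a) (hfg : EqOn f g (Ioi 0)) :
    HasLaplaceTransform g s a := by
  have h : EqOn (fun t => Real.exp (-(s * t)) • f t) (fun t => Real.exp (-(s * t)) • g t) (Ioi 0) :=
    fun t ht => congrArg (Real.exp (-(s * t)) • ·) (hfg ht)
  exact ⟨hf.1.congr_fun h measurableSet_Ioi,
    (setIntegral_congr_fun measurableSet_Ioi h).symm.trans hf.2⟩

theorem add {f g : ℝ → E} {a b : E} (hf : HasLaplaceTransform f s a)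
    (hg : HasLaplaceTransform g s b) : HasLaplaceTransform (fun t => f t + g t) s (a + b) := by
  simp only [HasLaplaceTransform, smul_add]
  exact ⟨hf.1.add hg.1, by rw [integral_add hf.1 hg.1, hf.2, hg.2]⟩

theorem const_smul {f : ℝ → E} {a : E} (hf : HasLaplaceTransform f s a) (c : ℝ) :
    HasLaplaceTransform (fun t => c • f t) s (c • a) := by
  simp only [HasLaplaceTransform, smul_comm _ c]
  exact ⟨hf.1.smul c, by rw [MeasureTheory.integral_smul, hf.2]⟩

theorem convolution [CompleteSpace E] [CompleteSpace F] [CompleteSpace G] {f : ℝ → E} {g : ℝ → F}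
    {a : E} {b : F} (hf : HasLaplaceTransform f s a) (hg : HasLaplaceTransform g s b)
    (L : E →L[ℝ] F →L[ℝ] G) :
    HasLaplaceTransform (fun t => ∫ u in (0 : ℝ)..t, L (f u) (g (t - u))) s (L a b) := by
  have exp_smul_convolution (t : ℝ) :
      Real.exp (-(s * t)) • ∫ u in (0 : ℝ)..t, L (f u) (g (t - u)) =
        ∫ u in (0 : ℝ)..t,
          L (Real.exp (-(s * u)) • f u) (Real.exp (-(s * (t - u))) • g (t - u)) := by
    rw [← intervalIntegral.integral_smul]
    congr with u
    rw [map_smul, map_smul, smul_apply, smul_smul, ← Real.exp_add]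
    ring_nf
  simp only [HasLaplaceTransform, exp_smul_convolution]
  refine ⟨?_, by rw [integral_posConvolution hf.1 hg.1 L, hf.2, hg.2]⟩
  exact (integrable_indicator_iff measurableSet_Ioi).mp (integrable_posConvolution hf.1 hg.1 L)

end HasLaplaceTransform

theorem integrableOn_exp_neg_mul_Ioi (hs : 0 < s) (c : ℝ) :
    IntegrableOn (fun t : ℝ => Real.exp (-(s * t))) (Ioi c) := by
  simpa only [neg_mul] using integrableOn_exp_mul_Ioi (neg_lt_zero.mpr hs) c

theorem integrableOn_exp_neg_mul_smul_of_bounded {f : ℝ → E} {c C : ℝ}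
    (hf : AEStronglyMeasurable f (volume.restrict (Ioi c)))
    (hC : ∀ᵐ t ∂volume.restrict (Ioi c), ‖f t‖ ≤ C) (hs : 0 < s) :
    IntegrableOn (fun t => Real.exp (-(s * t)) • f t) (Ioi c) :=
  (integrableOn_exp_neg_mul_Ioi hs c).smul_bdd C hf hC

theorem hasLaplaceTransform_const [CompleteSpace E] (c : E) (hs : 0 < s) :
    HasLaplaceTransform (fun _ => c) s (s⁻¹ • c) := by
  have integral_exp : ∫ t in Ioi (0 : ℝ), Real.exp (-(s * t)) = s⁻¹ := by
    simpa [neg_mul] using integral_exp_mul_Ioi (neg_lt_zero.mpr hs) 0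
  exact ⟨(integrableOn_exp_neg_mul_Ioi hs 0).smul_const c,
    by simp only [_root_.integral_smul_const, integral_exp]⟩

theorem hasLaplaceTransform_rpow {p : ℝ} (hp : -1 < p) (hs : 0 < s) :
    HasLaplaceTransform (fun t => t ^ p) s (Real.Gamma (p + 1) / s ^ (p + 1)) := by
  simp only [HasLaplaceTransform, smul_eq_mul, mul_comm (Real.exp _)]
  constructor
  · simpa only [neg_mul, Real.rpow_one] using
      integrableOn_rpow_mul_exp_neg_mul_rpow hp one_pos hs
  · have h := Real.integral_rpow_mul_exp_neg_mul_Ioi (neg_lt_iff_pos_add.mp hp) hs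
    rwa [add_sub_cancel_right, one_div, Real.inv_rpow hs.le, inv_mul_eq_div] at h

namespace HasLaplaceTransform

theorem integral [CompleteSpace E] {g : ℝ → E} {a : E} (hg : HasLaplaceTransform g s a)
    (hs : 0 < s) : HasLaplaceTransform (fun t => ∫ u in (0 : ℝ)..t, g u) s (s⁻¹ • a) := by
  simpa using
    hg.convolution (hasLaplaceTransform_const (1 : ℝ) hs) (ContinuousLinearMap.lsmul ℝ ℝ).flip

theorem of_deriv {f : ℝ → ℝ} {a : ℝ} (ha : HasLaplaceTransform (deriv f) s a)
    (hf : ∀ t > 0, AbsolutelyContinuousOnInterval f 0 t) (hs : 0 < s) :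
    HasLaplaceTransform f s (s⁻¹ * (f 0 + a)) := by
  have h := (hasLaplaceTransform_const (f 0) hs).add (ha.integral hs)
  rw [← smul_add] at h
  refine h.congr fun t ht => ?_
  simp only [(hf t ht).integral_deriv_eq_sub, add_sub_cancel]

theorem caputo_of_deriv {β : ℝ} {f : ℝ → ℝ} {a : ℝ} (ha : HasLaplaceTransform (deriv f) s a)
    (hβ : β < 1) (hs : 0 < s) : HasLaplaceTransform (caputo β f) s (s ^ (β - 1) * a) := by
  have hΓ : Real.Gamma (1 - β) ≠ 0 := (Real.Gamma_pos_of_pos (sub_pos.mpr hβ)).ne'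
  have hkernel : HasLaplaceTransform (fun t => t ^ (-β)) s (Real.Gamma (1 - β) / s ^ (1 - β)) := by
    simpa only [neg_add_eq_sub] using hasLaplaceTransform_rpow (neg_lt_neg hβ) hs
  have hvalue : 1 / Real.Gamma (1 - β) * (a * (Real.Gamma (1 - β) / s ^ (1 - β))) =
      s ^ (β - 1) * a := by
    rw [← neg_sub 1 β, Real.rpow_neg hs.le]
    field_simp
  have h := (ha.convolution hkernel (ContinuousLinearMap.mul ℝ ℝ)).const_smul
    (1 / Real.Gamma (1 - β))
  simp only [ContinuousLinearMap.mul_apply', smul_eq_mul, hvalue] at h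
  exact h.congr fun t _ => by simp only [caputo, mul_comm]

end HasLaplaceTransform

end Laplace

theorem stmt_16_general {β : ℝ} (hβ : β < 1) {f : ℝ → ℝ}
    (hf : ∀ t > 0, AbsolutelyContinuousOnInterval f 0 t) {s : ℝ} (hs : 0 < s)
    (hf' : IntegrableOn (fun t => Real.exp (-(s * t)) * deriv f t) (Set.Ioi 0)) :
    IntegrableOn (fun t => Real.exp (-(s * t)) * caputo β f t) (Set.Ioi 0) ∧
    IntegrableOn (fun t => Real.exp (-(s * t)) * f t) (Set.Ioi 0) ∧
    ∫ t in Set.Ioi (0:ℝ), Real.exp (-(s * t)) * caputo β f t =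
      s ^ β * (∫ t in Set.Ioi (0:ℝ), Real.exp (-(s * t)) * f t) - s ^ (β - 1) * f 0 := by
  have hderiv : HasLaplaceTransform (deriv f) s _ := ⟨hf', rfl⟩
  obtain ⟨caputo_integrable, integral_caputo⟩ := hderiv.caputo_of_deriv hβ hs
  obtain ⟨f_integrable, integral_f⟩ := hderiv.of_deriv hf hs
  refine ⟨caputo_integrable, f_integrable, ?_⟩
  simp only [smul_eq_mul] at integral_caputo integral_f
  rw [integral_caputo, integral_f, Real.rpow_sub_one hs.ne']
  ring

/-- Laplace transform of the Caputo fractional derivative: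
`L(D^β f)(s) = s^β · L(f)(s) − s^(β−1) · f(0)` for `s > 0`,
where both improper integrals converge. -/
theorem stmt_16 (β : ℝ) (hβ : β ∈ Set.Ioo (0:ℝ) 1)
    (f : ℝ → ℝ) (hf : ContDiff ℝ 1 f)
    (M : ℝ) (hM : ∀ t : ℝ, |deriv f t| ≤ M)
    (s : ℝ) (hs : 0 < s) :
    IntegrableOn (fun t => Real.exp (-(s * t)) * caputo β f t) (Set.Ioi 0) ∧
    IntegrableOn (fun t => Real.exp (-(s * t)) * f t) (Set.Ioi 0) ∧
    ∫ t in Set.Ioi (0:ℝ), Real.exp (-(s * t)) * caputo β f t =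
      s ^ β * (∫ t in Set.Ioi (0:ℝ), Real.exp (-(s * t)) * f t) - s ^ (β - 1) * f 0 :=
  stmt_16_general hβ.2 (fun _ _ => hf.contDiffOn.absolutelyContinuousOnInterval) hs
    (integrableOn_exp_neg_mul_smul_of_bounded (aestronglyMeasurable_deriv f _) (ae_of_all _ hM) hs)
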